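/- Let p₁₀, p₀₁ and p₃₀, p₂₁, p₁₂, p₀₃ be real numbers with p₁₀² + p₀₁² ≠ 0, and set P₁(θ) = p₁₀ cos θ + p₀₁ sin θ and P₃(θ) = p₃₀ cos³θ + p₂₁ cos²θ sin θ + p₁₂ cos θ sin²θ + p₀₃ sin³θ. Then the equation dr/dθ = r(P₁(θ) r + P₃(θ) r³) has a center at r = 0 if and only if p₁₀p₂₁ − p₀₁p₁₂ + 3p₁₀p₀₃ − 3p₀₁p₃₀ = 0 and p₃₀p₀₁³ − p₂₁p₀₁²p₁₀ + p₁₂p₀₁p₁₀² − p₀₃p₁₀³ = 0. -/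

import Mathlib

open Real

/-- A 2π-periodic scalar ODE `dr/dθ = F θ r` has a center at `r = 0` if every solution
with `|r 0|` sufficiently small is defined on `[0, 2π]` and satisfies `r (2π) = r 0`. -/
def HasCenterAtZero (F : ℝ → ℝ → ℝ) : Prop :=
  ∃ ε > (0 : ℝ), ∀ r : ℝ → ℝ, |r 0| < ε →
    (∀ θ ∈ Set.Icc (0 : ℝ) (2 * Real.pi), HasDerivAt r (F θ (r θ)) θ) →
    r (2 * Real.pi) = r 0

lemma qc_lip (C M A B x y : ℝ) (hA : |A| ≤ C) (hB : |B| ≤ C) (hx : |x| ≤ M) (hy : |y| ≤ M) :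
    |x * (A * x + B * x ^ 3) - y * (A * y + B * y ^ 3)| ≤ C * (2 * M + 4 * M ^ 3) * |x - y| := by
  have hM : 0 ≤ M := (abs_nonneg x).trans hx
  have hC : 0 ≤ C := (abs_nonneg A).trans hA
  have e : x * (A * x + B * x ^ 3) - y * (A * y + B * y ^ 3)
      = (A * (x + y) + B * (x ^ 3 + x ^ 2 * y + x * y ^ 2 + y ^ 3)) * (x - y) := by ring
  rw [e, abs_mul]
  refine mul_le_mul_of_nonneg_right ?_ (abs_nonneg _)
  have h1 : |x + y| ≤ 2 * M := (abs_add_le _ _).trans (by linarith)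
  have h2 : |x ^ 3 + x ^ 2 * y + x * y ^ 2 + y ^ 3| ≤ 4 * M ^ 3 := by
    have a1 : |x ^ 3| ≤ M ^ 3 := by rw [abs_pow]; gcongr
    have a2 : |x ^ 2 * y| ≤ M ^ 3 := by
      rw [abs_mul, abs_pow]
      calc |x| ^ 2 * |y| ≤ M ^ 2 * M := by gcongr
        _ = M ^ 3 := by ring
    have a3 : |x * y ^ 2| ≤ M ^ 3 := by
      rw [abs_mul, abs_pow]
      calc |x| * |y| ^ 2 ≤ M * M ^ 2 := by gcongr
        _ = M ^ 3 := by ring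
    have a4 : |y ^ 3| ≤ M ^ 3 := by rw [abs_pow]; gcongr
    have b1 := abs_add_le (x ^ 3 + x ^ 2 * y + x * y ^ 2) (y ^ 3)
    have b2 := abs_add_le (x ^ 3 + x ^ 2 * y) (x * y ^ 2)
    have b3 := abs_add_le (x ^ 3) (x ^ 2 * y)
    linarith
  calc _ ≤ |A * (x + y)| + |B * (x ^ 3 + x ^ 2 * y + x * y ^ 2 + y ^ 3)| := abs_add_le _ _
    _ = |A| * |x + y| + |B| * |x ^ 3 + x ^ 2 * y + x * y ^ 2 + y ^ 3| := by rw [abs_mul, abs_mul]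
    _ ≤ C * (2 * M) + C * (4 * M ^ 3) := by gcongr
    _ = _ := by ring

/-- Existence of small positive solutions on `[0, 2π]`. -/
lemma qc_exists (A B : ℝ → ℝ) (hAc : Continuous A) (hBc : Continuous B) (C : ℝ) (hC : 0 < C)
    (hA : ∀ t, |A t| ≤ C) (hB : ∀ t, |B t| ≤ C) (x₀ : ℝ) (h0 : 0 < x₀) (h1 : x₀ ≤ 1 / 2)
    (h2 : 80 * C * x₀ ≤ 1) :
    ∃ r : ℝ → ℝ, r 0 = x₀ ∧ ∀ t ∈ Set.Icc (0 : ℝ) (2 * Real.pi),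
      (x₀ / 2 ≤ r t ∧ r t ≤ 2 * x₀) ∧
        HasDerivAt r (r t * (A t * r t + B t * r t ^ 3)) t := by
  have hpi := Real.pi_lt_d2
  have hpi0 := Real.pi_pos
  have hball : ∀ x ∈ Metric.closedBall x₀ (x₀ / 2), x₀ / 2 ≤ x ∧ x ≤ 3 / 2 * x₀ := by
    intro x hx
    rw [Metric.mem_closedBall, Real.dist_eq, abs_le] at hx
    constructor <;> linarith [hx.1, hx.2]
  have hmem : (0 : ℝ) ∈ Set.Icc (-1 : ℝ) (2 * Real.pi + 1) := ⟨by norm_num, by linarith⟩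
  obtain ⟨a, ha⟩ : ∃ a : NNReal, (a : ℝ) = x₀ / 2 := ⟨⟨x₀ / 2, by positivity⟩, rfl⟩
  obtain ⟨L, hL⟩ : ∃ L : NNReal, (L : ℝ) = 5 * C * x₀ ^ 2 := ⟨⟨5 * C * x₀ ^ 2, by positivity⟩, rfl⟩
  obtain ⟨K, hK⟩ : ∃ K : NNReal, (K : ℝ) = C * (2 * 1 + 4 * 1 ^ 3) :=
    ⟨⟨C * (2 * 1 + 4 * 1 ^ 3), by positivity⟩, rfl⟩
  have hPL : IsPicardLindelof (fun t x => x * (A t * x + B t * x ^ 3))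
      (tmin := -1) (tmax := 2 * Real.pi + 1) ⟨0, hmem⟩ x₀ a 0 L K := by
    refine ⟨?_, ?_, ?_, ?_⟩
    · intro t _
      refine LipschitzOnWith.of_dist_le_mul fun x hx y hy => ?_
      rw [Real.dist_eq, Real.dist_eq, hK]
      have h3 := hball x (ha ▸ hx)
      have h4 := hball y (ha ▸ hy)
      exact qc_lip C 1 (A t) (B t) x y (hA t) (hB t)
        (abs_le.2 ⟨by linarith [h3.1], by linarith [h3.2]⟩)
        (abs_le.2 ⟨by linarith [h4.1], by linarith [h4.2]⟩)
    · intro x _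
      fun_prop
    · intro t _ x hx
      have h3 := hball x (ha ▸ hx)
      have hx0 : 0 < x := by linarith [h3.1]
      have hx1 : x ≤ 1 := by linarith [h3.2]
      rw [Real.norm_eq_abs]
      rw [hL]
      have e : x * (A t * x + B t * x ^ 3) = (A t + B t * x ^ 2) * x ^ 2 := by ring
      rw [e, abs_mul, abs_of_nonneg (sq_nonneg x)]
      have h5 : |A t + B t * x ^ 2| ≤ 2 * C := by
        refine (abs_add_le _ _).trans ?_
        rw [abs_mul, abs_of_nonneg (sq_nonneg x)]
        have : |B t| * x ^ 2 ≤ C * 1 := by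
          have : x ^ 2 ≤ 1 := by nlinarith
          gcongr
          exact hB t
        linarith [hA t]
      have h6 : x ^ 2 ≤ 9 / 4 * x₀ ^ 2 := by nlinarith [h3.2]
      calc _ ≤ 2 * C * (9 / 4 * x₀ ^ 2) := by gcongr
        _ ≤ _ := by nlinarith [mul_pos hC (pow_pos h0 2)]
    · rw [hL, ha]
      change 5 * C * x₀ ^ 2 * max (2 * Real.pi + 1 - 0) (0 - (-1)) ≤ x₀ / 2 - 0
      have : max (2 * Real.pi + 1 - 0) (0 - (-1)) ≤ 8 := max_le (by linarith) (by norm_num)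
      calc _ ≤ 5 * C * x₀ ^ 2 * 8 := by gcongr
        _ = (80 * C * x₀) * (x₀ / 2) := by ring
        _ ≤ 1 * (x₀ / 2) := by gcongr
        _ = _ := by ring
  have hx : x₀ ∈ Metric.closedBall x₀ ((0 : NNReal) : ℝ) := by simp
  obtain ⟨α, hα⟩ := ODE.FunSpace.exists_isFixedPt_next hPL hx
  refine ⟨α.compProj, ?_, fun t ht => ⟨?_, ?_⟩⟩
  · have : α.compProj ((⟨0, hmem⟩ : Set.Icc (-1 : ℝ) (2 * Real.pi + 1)) : ℝ) = x₀ := by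
      rw [ODE.FunSpace.compProj_val, ← hα, ODE.FunSpace.next_apply₀]
    exact this
  · have h3 := hball (α.compProj t) (ha ▸ α.compProj_mem_closedBall hPL.mul_max_le)
    exact ⟨h3.1, by linarith [h3.2]⟩
  · have ht' : t ∈ Set.Icc (-1 : ℝ) (2 * Real.pi + 1) := ⟨by linarith [ht.1], by linarith [ht.2]⟩
    have key : HasDerivWithinAt α.compProj
        (α.compProj t * (A t * α.compProj t + B t * α.compProj t ^ 3))
        (Set.Icc (-1 : ℝ) (2 * Real.pi + 1)) t := by
      apply ODE.hasDerivWithinAt_picard_Icc hmem hPL.continuousOn_uncurry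
        α.continuous_compProj.continuousOn
        (fun _ ht' => α.compProj_mem_closedBall hPL.mul_max_le)
        x₀ ht' |>.congr_of_mem _ ht'
      intro t' ht'
      nth_rw 1 [← hα]
      rw [ODE.FunSpace.compProj_of_mem ht', ODE.FunSpace.next_apply]
    exact key.hasDerivAt (Icc_mem_nhds (by linarith [ht.1]) (by linarith [ht.2]))

/-- Reversibility: solutions of an equation symmetric about `α` are symmetric about `α`. -/
lemma qc_symm (A B : ℝ → ℝ) (C : ℝ)
    (hA : ∀ t, |A t| ≤ C) (hB : ∀ t, |B t| ≤ C) (α d : ℝ) (hd : 0 ≤ d)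
    (sA : ∀ t, A (2 * α - t) = -A t) (sB : ∀ t, B (2 * α - t) = -B t) (r : ℝ → ℝ)
    (hr : ∀ t ∈ Set.Icc (α - d) (α + d), HasDerivAt r (r t * (A t * r t + B t * r t ^ 3)) t) :
    r (α - d) = r (α + d) := by
  have hC : 0 ≤ C := (abs_nonneg _).trans (hA 0)
  have hc : ContinuousOn r (Set.Icc (α - d) (α + d)) :=
    fun t ht => (hr t ht).continuousAt.continuousWithinAt
  obtain ⟨M₀, hM₀⟩ := isCompact_Icc.exists_bound_of_continuousOn hc
  set M := max M₀ 0
  have hM : ∀ t ∈ Set.Icc (α - d) (α + d), |r t| ≤ M :=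
    fun t ht => (hM₀ t ht).trans (le_max_left _ _)
  have hM0 : 0 ≤ M := le_max_right _ _
  have hs : ∀ t ∈ Set.Icc α (α + d), HasDerivAt (fun t => r (2 * α - t))
      (r (2 * α - t) * (A t * r (2 * α - t) + B t * r (2 * α - t) ^ 3)) t := by
    intro t ht
    have h1 := hr (2 * α - t) ⟨by linarith [ht.2], by linarith [ht.1]⟩
    have h2 : HasDerivAt (fun t => 2 * α - t) (-1) t := by
      simpa using (hasDerivAt_id t).const_sub (2 * α)
    have h3 := h1.comp t h2
    rw [sA, sB] at h3
    refine h3.congr_deriv ?_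
    ring
  have hr' : ∀ t ∈ Set.Icc α (α + d), HasDerivAt r (r t * (A t * r t + B t * r t ^ 3)) t :=
    fun t ht => hr t ⟨by linarith [ht.1], ht.2⟩
  have key := ODE_solution_unique_of_mem_Icc_right (a := α) (b := α + d)
    (v := fun t x => x * (A t * x + B t * x ^ 3)) (s := fun _ => Set.Icc (-M) M)
    (K := (⟨C * (2 * M + 4 * M ^ 3), by positivity⟩ : NNReal))
    (f := fun t => r (2 * α - t)) (g := r) ?_
    (fun t ht => (hs t ht).continuousAt.continuousWithinAt)
    (fun t ht => (hs t ⟨ht.1, ht.2.le⟩).hasDerivWithinAt)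
    (fun t ht => abs_le.1 (hM _ ⟨by linarith [ht.2], by linarith [ht.1]⟩))
    (fun t ht => (hr' t ht).continuousAt.continuousWithinAt)
    (fun t ht => (hr' t ⟨ht.1, ht.2.le⟩).hasDerivWithinAt)
    (fun t ht => abs_le.1 (hM _ ⟨by linarith [ht.1], ht.2.le⟩))
    (by congr 1; ring)
  · have := key (x := α + d) ⟨by linarith, le_rfl⟩
    simp only at this
    rw [← this]
    congr 1
    ring
  · intro t _
    refine LipschitzOnWith.of_dist_le_mul fun x hx y hy => ?_
    rw [Real.dist_eq, Real.dist_eq]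
    exact qc_lip C M (A t) (B t) x y (hA t) (hB t) (abs_le.2 hx) (abs_le.2 hy)

/-- `g` has mean `m`, witnessed by a `2π`-periodic antiderivative of `g - m`. -/
def QA (g : ℝ → ℝ) (m : ℝ) : Prop :=
  ∃ F : ℝ → ℝ, (∀ t, HasDerivAt F (g t - m) t) ∧ F 0 = F (2 * Real.pi)

lemma QA.comb {g₁ g₂ : ℝ → ℝ} {m₁ m₂ : ℝ} (h₁ : QA g₁ m₁) (h₂ : QA g₂ m₂) (a b : ℝ) :
    QA (fun t => a * g₁ t + b * g₂ t) (a * m₁ + b * m₂) := by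
  obtain ⟨F, hF, hp⟩ := h₁
  obtain ⟨G, hG, hq⟩ := h₂
  refine ⟨fun t => a * F t + b * G t, fun t => ?_, by simp only [hp, hq]⟩
  refine (((hF t).const_mul a).add ((hG t).const_mul b)).congr_deriv ?_
  ring

lemma QA.const (m : ℝ) : QA (fun _ => m) m :=
  ⟨fun _ => 0, fun t => by simpa using hasDerivAt_const t (0 : ℝ), rfl⟩

lemma QA.mono (i j : ℕ) : QA (fun t => -(i * cos t ^ (i - 1) * sin t ^ (j + 1))
    + j * cos t ^ (i + 1) * sin t ^ (j - 1)) 0 := by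
  refine ⟨fun t => cos t ^ i * sin t ^ j, fun t => ?_, by simp⟩
  refine (((hasDerivAt_cos t).pow i).mul ((hasDerivAt_sin t).pow j)).congr_deriv ?_
  simp only [Pi.pow_apply]
  ring

lemma QA.congr {g g' : ℝ → ℝ} {m m' : ℝ} (h : QA g m) (hg : ∀ t, g' t = g t) (hm : m' = m) :
    QA g' m' := by
  have : g' = g := funext hg
  rw [this, hm]; exact h

lemma QA22 : QA (fun t => cos t ^ 2 * sin t ^ 2) (1 / 8) := by
  refine (((QA.mono 3 1).comb (QA.mono 1 3) (-1 / 8) (1 / 8)).comb (QA.const (1 / 8)) 1 1).congr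
    (fun t => ?_) (by norm_num)
  have h := sin_sq_add_cos_sq t
  norm_num
  linear_combination (sin t ^ 2 + cos t ^ 2 + 1) / 8 * h

lemma QA_four (a b c d e : ℝ) : QA (fun t => a * cos t ^ 4 + b * cos t ^ 3 * sin t
    + c * cos t ^ 2 * sin t ^ 2 + d * cos t * sin t ^ 3 + e * sin t ^ 4)
    ((3 * a + c + 3 * e) / 8) := by
  refine (((QA22.comb (QA.mono 3 1) (3 * a + c + 3 * e) a).comb
    ((QA.mono 1 3).comb (QA.mono 4 0) (-e) (-b / 4)) 1 1).comb (QA.mono 0 4) 1 (d / 4)).congr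
    (fun t => ?_) (by ring)
  norm_num
  ring

lemma QA_six (a b c d e f g : ℝ) : QA (fun t => a * cos t ^ 6 + b * cos t ^ 5 * sin t
    + c * cos t ^ 4 * sin t ^ 2 + d * cos t ^ 3 * sin t ^ 3 + e * cos t ^ 2 * sin t ^ 4
    + f * cos t * sin t ^ 5 + g * sin t ^ 6)
    ((5 * a + c + e + 5 * g) / 16) := by
  -- coefficients of the two middle monomials after integrating by parts
  refine ((((QA22.comb (QA.mono 3 3) ((5 * a + c + e + 5 * g) / 2)
      ((5 * a + c - e - 5 * g) / 6)).comb
    ((QA.mono 5 1).comb (QA.mono 1 5) a (-g)) 1 1).comb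
    ((QA.mono 6 0).comb (QA.mono 0 6) (-b / 6) (f / 6)) 1 1).comb
    ((QA.mono 0 4).comb (QA.mono 0 6) (d / 4) (-d / 6)) 1 1).congr
    (fun t => ?_) (by ring)
  have h := sin_sq_add_cos_sq t
  norm_num
  linear_combination ((5 * a + c + e + 5 * g) / 2 * cos t ^ 2 * sin t ^ 2
    + d * cos t * sin t ^ 3) * h

lemma QA_three (a b c d : ℝ) : QA (fun t => a * cos t ^ 3 + b * cos t ^ 2 * sin t
    + c * cos t * sin t ^ 2 + d * sin t ^ 3) 0 := by
  refine (((QA.mono 0 1).comb (QA.mono 1 0) a (-d)).comb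
    ((QA.mono 0 3).comb (QA.mono 3 0) ((c - a) / 3) ((d - b) / 3)) 1 1).congr
    (fun t => ?_) (by ring)
  have h := sin_sq_add_cos_sq t
  norm_num
  linear_combination (a * cos t + d * sin t) * h

lemma QA_five (a b c d e f : ℝ) : QA (fun t => a * cos t ^ 5 + b * cos t ^ 4 * sin t
    + c * cos t ^ 3 * sin t ^ 2 + d * cos t ^ 2 * sin t ^ 3 + e * cos t * sin t ^ 4
    + f * sin t ^ 5) 0 := by
  refine ((((QA.mono 0 1).comb (QA.mono 1 0) a (-f)).comb
    ((QA.mono 0 3).comb (QA.mono 3 0) ((c - 2 * a) / 3) ((2 * f - d) / 3)) 1 1).comb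
    ((QA.mono 0 5).comb (QA.mono 5 0) ((a - c + e) / 5) ((d - f - b) / 5)) 1 1).congr
    (fun t => ?_) (by ring)
  have h := sin_sq_add_cos_sq t
  have hc : cos t ^ 2 = 1 - sin t ^ 2 := by linarith
  norm_num
  grind

lemma qc_zero (a K : ℝ) (h : ∀ δ > 0, ∃ u, 0 < u ∧ u < δ ∧ |a| ≤ K * u) : a = 0 := by
  by_contra ha
  have ha' : 0 < |a| := abs_pos.2 ha
  obtain ⟨u, hu, hud, hle⟩ := h (|a| / (|K| + 1)) (by positivity)
  rw [lt_div_iff₀ (by positivity)] at hud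
  have : K * u ≤ |K| * u := by gcongr; exact le_abs_self K
  nlinarith

lemma qc_necessary (A B σ F0 F1 F2 F3 : ℝ → ℝ) (m1 m3 C : ℝ) (hAc : Continuous A)
    (hBc : Continuous B) (hC : 0 < C) (hA : ∀ t, |A t| ≤ C) (hB : ∀ t, |B t| ≤ C)
    (hS : ∀ t, |σ t| ≤ C)
    (hσ : ∀ t, HasDerivAt σ (A t) t) (h0 : ∀ t, HasDerivAt F0 (B t) t)
    (h1 : ∀ t, HasDerivAt F1 (B t * σ t - m1) t)
    (h2 : ∀ t, HasDerivAt F2 (B t * σ t ^ 2) t)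
    (h3 : ∀ t, HasDerivAt F3 (B t * σ t ^ 3 - m3) t)
    (pσ : σ 0 = σ (2 * Real.pi)) (p0 : F0 0 = F0 (2 * Real.pi)) (p1 : F1 0 = F1 (2 * Real.pi))
    (p2 : F2 0 = F2 (2 * Real.pi)) (p3 : F3 0 = F3 (2 * Real.pi))
    (hcen : HasCenterAtZero (fun θ r => r * (A θ * r + B θ * r ^ 3))) : m1 = 0 ∧ m3 = 0 := by
  obtain ⟨ε, hε, hcen⟩ := hcen
  have cσ : Continuous σ := continuous_iff_continuousAt.2 fun t => (hσ t).continuousAt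
  have c0 : Continuous F0 := continuous_iff_continuousAt.2 fun t => (h0 t).continuousAt
  have c1 : Continuous F1 := continuous_iff_continuousAt.2 fun t => (h1 t).continuousAt
  have c2 : Continuous F2 := continuous_iff_continuousAt.2 fun t => (h2 t).continuousAt
  have c3 : Continuous F3 := continuous_iff_continuousAt.2 fun t => (h3 t).continuousAt
  set N : ℝ × ℝ → ℝ := fun p => -B p.1 * σ p.1 ^ 4 * (5 - 4 * p.2 * σ p.1)
    + 2 * F0 p.1 * B p.1 * σ p.1 * (2 - p.2 * σ p.1)
    + (6 * F1 p.1 + 12 * F2 p.1 * p.2 + 5 * (4 * F3 p.1 - F0 p.1 ^ 2) * p.2 ^ 2) * B p.1 with hN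
  have hNc : Continuous N := by fun_prop
  set η : ℝ := 1 / (2 * C) with hη
  have hη0 : 0 < η := by positivity
  have hden : ∀ t u : ℝ, 0 ≤ u → u ≤ η → 1 / 2 ≤ 1 - u * σ t := by
    intro t u hu hu'
    have h4 : u * σ t ≤ η * C :=
      (mul_le_mul_of_nonneg_left ((le_abs_self _).trans (hS t)) hu).trans
        (mul_le_mul_of_nonneg_right hu' hC.le)
    have h5 : η * C = 1 / 2 := by rw [hη]; field_simp
    linarith
  obtain ⟨M, hM⟩ := (isCompact_Icc (a := (0 : ℝ)) (b := 2 * Real.pi)).prod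
    (isCompact_Icc (a := (0 : ℝ)) (b := η)) |>.exists_bound_of_continuousOn
    (f := fun p => N p / (1 - p.2 * σ p.1) ^ 2) (by
      refine hNc.continuousOn.div (by fun_prop) ?_
      intro p hp
      have := hden p.1 p.2 hp.2.1 hp.2.2
      positivity)
  have main : ∀ δ > 0, ∃ u, 0 < u ∧ u < δ ∧ |2 * m1 + 4 * m3 * u ^ 2| ≤ M * u ^ 3 := by
    intro δ hδ
    -- choose a small initial value
    obtain ⟨x₀, hx0, hx1⟩ : ∃ x₀ : ℝ, 0 < x₀ ∧
        x₀ < min (min (1 / 2) (1 / (80 * C))) (min ε (δ / 8)) :=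
      exists_between (by positivity)
    simp only [lt_min_iff] at hx1
    obtain ⟨⟨hxa, hxb⟩, hxc, hxd⟩ := hx1
    rw [lt_div_iff₀ (by positivity)] at hxb
    obtain ⟨r, hr0, hr⟩ := qc_exists A B hAc hBc C hC hA hB x₀ hx0 hxa.le (by linarith)
    have hper := hcen r (by rw [hr0, abs_of_pos hx0]; exact hxc) (fun t ht => (hr t ht).2)
    have hpos : ∀ t ∈ Set.Icc (0 : ℝ) (2 * Real.pi), 0 < r t :=
      fun t ht => by linarith [(hr t ht).1.1]
    have hrσ : ∀ t ∈ Set.Icc (0 : ℝ) (2 * Real.pi), 1 / 2 ≤ 1 + r t * σ t := by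
      intro t ht
      have h4 : |r t * σ t| ≤ 2 * x₀ * C := by
        rw [abs_mul, abs_of_pos (hpos t ht)]
        exact mul_le_mul (hr t ht).1.2 (hS t) (abs_nonneg _) (by positivity)
      have h5 := neg_abs_le (r t * σ t)
      linarith
    set u : ℝ → ℝ := fun t => r t / (1 + r t * σ t) with hu
    have hupos : ∀ t ∈ Set.Icc (0 : ℝ) (2 * Real.pi), 0 < u t := fun t ht =>
      div_pos (hpos t ht) (by linarith [hrσ t ht])
    have hule : ∀ t ∈ Set.Icc (0 : ℝ) (2 * Real.pi), u t ≤ 4 * x₀ := by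
      intro t ht
      rw [hu, div_le_iff₀ (by linarith [hrσ t ht])]
      nlinarith [hrσ t ht, (hr t ht).1.2]
    have huη : ∀ t ∈ Set.Icc (0 : ℝ) (2 * Real.pi), u t ≤ η := by
      intro t ht
      refine (hule t ht).trans ?_
      rw [hη, le_div_iff₀ (by positivity)]
      linarith
    have huder : ∀ t ∈ Set.Icc (0 : ℝ) (2 * Real.pi),
        HasDerivAt u (B t * u t ^ 4 / (1 - u t * σ t) ^ 2) t := by
      intro t ht
      have hne : 1 + r t * σ t ≠ 0 := by linarith [hrσ t ht]
      have e : 1 - u t * σ t = 1 / (1 + r t * σ t) := by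
        simp only [hu]; field_simp; ring
      have hd := (hr t ht).2.div (((hr t ht).2.mul (hσ t)).const_add 1) hne
      refine hd.congr_deriv ?_
      rw [e]
      simp only [hu, Pi.mul_apply]
      field_simp
      ring
    set J : ℝ → ℝ := fun t => 1 / u t + F0 t * u t ^ 2 + 2 * F1 t * u t ^ 3 + 3 * F2 t * u t ^ 4
      + (4 * F3 t - F0 t ^ 2) * u t ^ 5 with hJ
    have hJder : ∀ t ∈ Set.Icc (0 : ℝ) (2 * Real.pi), HasDerivAt J
        (-2 * m1 * u t ^ 3 - 4 * m3 * u t ^ 5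
          + u t ^ 6 * (N (t, u t) / (1 - u t * σ t) ^ 2)) t := by
      intro t ht
      have hu0 : u t ≠ 0 := (hupos t ht).ne'
      have hne : 1 - u t * σ t ≠ 0 := by linarith [hden t (u t) (hupos t ht).le (huη t ht)]
      have du := huder t ht
      have d := (((((hasDerivAt_const t (1 : ℝ)).div du hu0).add ((h0 t).mul (du.pow 2))).add
        (((h1 t).const_mul 2).mul (du.pow 3))).add (((h2 t).const_mul 3).mul (du.pow 4))).add
        ((((h3 t).const_mul 4).sub ((h0 t).pow 2)).mul (du.pow 5))
      refine d.congr_deriv ?_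
      simp only [hN, Pi.pow_apply, Pi.sub_apply]
      generalize u t = w at *
      norm_num
      field_simp
      ring
    have hJper : J 0 = J (2 * Real.pi) := by
      simp only [hJ, hu, hper, ← pσ, ← p0, ← p1, ← p2, ← p3]
    obtain ⟨t, ht, hz⟩ := exists_hasDerivAt_eq_zero Real.two_pi_pos
      (fun t ht => (hJder t ht).continuousAt.continuousWithinAt) hJper
      (fun t ht => hJder t (Set.Ioo_subset_Icc_self ht))
    have ht' := Set.Ioo_subset_Icc_self ht
    have hut := hupos t ht'
    refine ⟨u t, hut, by linarith [hule t ht'], ?_⟩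
    have hb := hM (t, u t) ⟨ht', hut.le, huη t ht'⟩
    simp only [Real.norm_eq_abs] at hb
    generalize N (t, u t) / (1 - u t * σ t) ^ 2 = E at hz hb
    have e : 2 * m1 + 4 * m3 * u t ^ 2 = E * u t ^ 3 := by
      have h3 : u t ^ 3 ≠ 0 := by positivity
      apply mul_left_cancel₀ h3
      linear_combination -hz
    rw [e, abs_mul, abs_of_pos (pow_pos hut 3)]
    gcongr
  have hM0 : 0 ≤ M := (norm_nonneg _).trans
    (hM (0, 0) ⟨⟨le_rfl, Real.two_pi_pos.le⟩, le_rfl, hη0.le⟩)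
  have e1 : m1 = 0 := by
    refine qc_zero m1 (M + 4 * |m3|) fun δ hδ => ?_
    obtain ⟨u, hu, hud, hle⟩ := main (min δ 1) (by positivity)
    rw [lt_min_iff] at hud
    refine ⟨u, hu, hud.1, ?_⟩
    have h5 : |2 * m1| ≤ |2 * m1 + 4 * m3 * u ^ 2| + |4 * m3 * u ^ 2| := by
      have := abs_sub (2 * m1 + 4 * m3 * u ^ 2) (4 * m3 * u ^ 2)
      simpa using this
    have h6 : |4 * m3 * u ^ 2| = 4 * |m3| * u ^ 2 := by
      rw [abs_mul, abs_mul, abs_of_pos (pow_pos hu 2)]; norm_num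
    have h7 : |2 * m1| = 2 * |m1| := by rw [abs_mul]; norm_num
    have h8 : u ^ 2 ≤ u := by nlinarith
    have h9 : u ^ 3 ≤ u := by nlinarith
    have h10 : M * u ^ 3 ≤ M * u := by gcongr
    have h11 : 4 * |m3| * u ^ 2 ≤ 4 * |m3| * u := by gcongr
    have := abs_nonneg m1
    linarith
  refine ⟨e1, qc_zero m3 M fun δ hδ => ?_⟩
  obtain ⟨u, hu, hud, hle⟩ := main δ hδ
  refine ⟨u, hu, hud, ?_⟩
  rw [e1, mul_zero, zero_add, abs_mul, abs_mul, abs_of_pos (pow_pos hu 2)] at hle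
  norm_num at hle
  have h5 : 4 * |m3| ≤ M * u := by
    refine le_of_mul_le_mul_right ?_ (pow_pos hu 2)
    linarith
  linarith [abs_nonneg m3]

lemma qc_bound1 (a b t : ℝ) : |a * cos t + b * sin t| ≤ |a| + |b| := by
  refine (abs_add_le _ _).trans ?_
  rw [abs_mul, abs_mul]
  exact add_le_add (mul_le_of_le_one_right (abs_nonneg _) (abs_cos_le_one t))
    (mul_le_of_le_one_right (abs_nonneg _) (abs_sin_le_one t))

lemma qc_bound3 (a b c d t : ℝ) : |a * cos t ^ 3 + b * cos t ^ 2 * sin t + c * cos t * sin t ^ 2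
    + d * sin t ^ 3| ≤ |a| + |b| + |c| + |d| := by
  have hc := abs_cos_le_one t
  have hs := abs_sin_le_one t
  have hm : ∀ (x : ℝ) (i j : ℕ), |x * (cos t ^ i * sin t ^ j)| ≤ |x| := by
    intro x i j
    rw [abs_mul, abs_mul, abs_pow, abs_pow]
    exact mul_le_of_le_one_right (abs_nonneg _)
      (mul_le_one₀ (pow_le_one₀ (abs_nonneg _) hc) (by positivity)
        (pow_le_one₀ (abs_nonneg _) hs))
  have e : a * cos t ^ 3 + b * cos t ^ 2 * sin t + c * cos t * sin t ^ 2 + d * sin t ^ 3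
      = a * (cos t ^ 3 * sin t ^ 0) + b * (cos t ^ 2 * sin t ^ 1) + c * (cos t ^ 1 * sin t ^ 2)
        + d * (cos t ^ 0 * sin t ^ 3) := by ring
  rw [e]
  refine (abs_add_le _ _).trans (add_le_add ?_ (hm d 0 3))
  refine (abs_add_le _ _).trans (add_le_add ?_ (hm c 1 2))
  exact (abs_add_le _ _).trans (add_le_add (hm a 3 0) (hm b 2 1))

/-- Corollary 2.5: the equation `dr/dθ = r (P₁ r + P₃ r³)` has a center at `r = 0` iff
`p₁₀p₂₁ − p₀₁p₁₂ + 3p₁₀p₀₃ − 3p₀₁p₃₀ = 0` and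
`p₃₀p₀₁³ − p₂₁p₀₁²p₁₀ + p₁₂p₀₁p₁₀² − p₀₃p₁₀³ = 0`. -/
theorem quartic_center_conditions
    (p10 p01 p30 p21 p12 p03 : ℝ) (h : p10 ^ 2 + p01 ^ 2 ≠ 0)
    (P1 P3 : ℝ → ℝ)
    (hP1 : ∀ θ, P1 θ = p10 * Real.cos θ + p01 * Real.sin θ)
    (hP3 : ∀ θ, P3 θ = p30 * Real.cos θ ^ 3 + p21 * Real.cos θ ^ 2 * Real.sin θ +
      p12 * Real.cos θ * Real.sin θ ^ 2 + p03 * Real.sin θ ^ 3) :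
    HasCenterAtZero (fun θ r => r * (P1 θ * r + P3 θ * r ^ 3)) ↔
      (p10 * p21 - p01 * p12 + 3 * p10 * p03 - 3 * p01 * p30 = 0 ∧
       p30 * p01 ^ 3 - p21 * p01 ^ 2 * p10 + p12 * p01 * p10 ^ 2 - p03 * p10 ^ 3 = 0) := by
  set C : ℝ := |p10| + |p01| + (|p30| + |p21| + |p12| + |p03|) + 1 with hC
  have hC0 : 0 < C := by positivity
  have hA : ∀ t, |P1 t| ≤ C := fun t => by
    rw [hP1]
    have : 0 ≤ |p30| + |p21| + |p12| + |p03| := by positivity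
    linarith [qc_bound1 p10 p01 t]
  have hB : ∀ t, |P3 t| ≤ C := fun t => by
    rw [hP3]
    have : 0 ≤ |p10| + |p01| := by positivity
    linarith [qc_bound3 p30 p21 p12 p03 t]
  constructor
  · intro hcen
    obtain ⟨F0, d0, q0⟩ := QA_three p30 p21 p12 p03
    obtain ⟨F1, d1, q1⟩ := QA_four (-p01 * p30) (p10 * p30 - p01 * p21) (p10 * p21 - p01 * p12)
      (p10 * p12 - p01 * p03) (p10 * p03)
    obtain ⟨F2, d2, q2⟩ := QA_five (p01 ^ 2 * p30) (p01 ^ 2 * p21 - 2 * p10 * p01 * p30)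
      (p01 ^ 2 * p12 - 2 * p10 * p01 * p21 + p10 ^ 2 * p30)
      (p01 ^ 2 * p03 - 2 * p10 * p01 * p12 + p10 ^ 2 * p21)
      (- 2 * p10 * p01 * p03 + p10 ^ 2 * p12) (p10 ^ 2 * p03)
    obtain ⟨F3, d3, q3⟩ := QA_six (-p01 ^ 3 * p30) (-p01 ^ 3 * p21 + 3 * p10 * p01 ^ 2 * p30)
      (-p01 ^ 3 * p12 + 3 * p10 * p01 ^ 2 * p21 - 3 * p10 ^ 2 * p01 * p30)
      (-p01 ^ 3 * p03 + 3 * p10 * p01 ^ 2 * p12 - 3 * p10 ^ 2 * p01 * p21 + p10 ^ 3 * p30)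
      (3 * p10 * p01 ^ 2 * p03 - 3 * p10 ^ 2 * p01 * p12 + p10 ^ 3 * p21)
      (- 3 * p10 ^ 2 * p01 * p03 + p10 ^ 3 * p12) (p10 ^ 3 * p03)
    have hP1c : Continuous P1 := by
      rw [funext hP1]; fun_prop
    have hP3c : Continuous P3 := by
      rw [funext hP3]; fun_prop
    have key := qc_necessary P1 P3 (fun t => -p01 * cos t + p10 * sin t) F0 F1 F2 F3
      ((3 * (-p01 * p30) + (p10 * p21 - p01 * p12) + 3 * (p10 * p03)) / 8)
      ((5 * (-p01 ^ 3 * p30) + (-p01 ^ 3 * p12 + 3 * p10 * p01 ^ 2 * p21 - 3 * p10 ^ 2 * p01 * p30)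
        + (3 * p10 * p01 ^ 2 * p03 - 3 * p10 ^ 2 * p01 * p12 + p10 ^ 3 * p21)
        + 5 * (p10 ^ 3 * p03)) / 16) C
      hP1c hP3c hC0 hA hB (fun t => ?_) (fun t => ?_)
      (fun t => (d0 t).congr_deriv ?_) (fun t => (d1 t).congr_deriv ?_)
      (fun t => (d2 t).congr_deriv ?_) (fun t => (d3 t).congr_deriv ?_) (by simp) q0 q1 q2 q3 hcen
    · obtain ⟨k1, k3⟩ := key
      constructor
      · linear_combination 8 * k1
      · linear_combination -8 * k3 + 4 * (p10 ^ 2 + p01 ^ 2) * k1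
    · have := qc_bound1 (-p01) p10 t
      rw [abs_neg] at this
      have : 0 ≤ |p30| + |p21| + |p12| + |p03| := by positivity
      linarith
    · refine (((hasDerivAt_cos t).const_mul (-p01)).add
        ((hasDerivAt_sin t).const_mul p10)).congr_deriv ?_
      rw [hP1]; ring
    · rw [hP3]; ring
    · rw [hP3]; ring
    · rw [hP3]; ring
    · rw [hP3]; ring
  · rintro ⟨g1, g2⟩
    refine ⟨1, one_pos, fun r _ hr => ?_⟩
    obtain ⟨α, hα, hα0⟩ : ∃ α ∈ Set.Icc (0 : ℝ) Real.pi, p10 * cos α + p01 * sin α = 0 := by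
      have hcont : ContinuousOn (fun t => p10 * cos t + p01 * sin t)
          (Set.uIcc 0 Real.pi) := by fun_prop
      have h0 : (0 : ℝ) ∈ Set.uIcc (p10 * cos 0 + p01 * sin 0)
          (p10 * cos Real.pi + p01 * sin Real.pi) := by
        simp only [cos_zero, sin_zero, cos_pi, sin_pi, Set.mem_uIcc]
        rcases le_total p10 0 with h | h
        · left; constructor <;> linarith
        · right; constructor <;> linarith
      obtain ⟨α, hα, he⟩ := intermediate_value_uIcc hcont h0
      rw [Set.uIcc_of_le Real.pi_pos.le] at hα
      exact ⟨α, hα, he⟩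
    have hpy := sin_sq_add_cos_sq α
    set k := p10 * sin α - p01 * cos α with hk
    have e1 : p10 = k * sin α := by
      rw [hk]; linear_combination cos α * hα0 - p10 * hpy
    have e2 : p01 = -k * cos α := by
      rw [hk]; linear_combination sin α * hα0 - p01 * hpy
    have hk0 : k ≠ 0 := by
      intro h0
      apply h
      rw [e1, e2, h0]; ring
    have f1 : sin α * p21 + cos α * p12 + 3 * sin α * p03 + 3 * cos α * p30 = 0 := by
      apply mul_left_cancel₀ hk0
      rw [e1, e2] at g1
      linear_combination g1
    have f2 : p30 * cos α ^ 3 + p21 * cos α ^ 2 * sin α + p12 * cos α * sin α ^ 2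
        + p03 * sin α ^ 3 = 0 := by
      apply mul_left_cancel₀ (pow_ne_zero 3 hk0)
      rw [e1, e2] at g2
      linear_combination -g2
    have f3 : 3 * p30 * cos α * sin α ^ 2 + p21 * (sin α ^ 3 - 2 * cos α ^ 2 * sin α)
        + p12 * (cos α ^ 3 - 2 * sin α ^ 2 * cos α) + 3 * p03 * sin α * cos α ^ 2 = 0 := by
      linear_combination f1 - 3 * f2
        + (3 * p30 * cos α + p21 * sin α + p12 * cos α + 3 * p03 * sin α) * hpy
    have sA : ∀ t, P1 (2 * α - t) = -P1 t := by
      intro t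
      have a1 : 2 * α - t = α - (t - α) := by ring
      have a2 : t = α + (t - α) := by ring
      rw [a1]
      conv_rhs => rw [a2]
      generalize t - α = x
      rw [hP1, hP1, cos_sub, sin_sub, cos_add, sin_add]
      linear_combination 2 * cos x * hα0
    have sB : ∀ t, P3 (2 * α - t) = -P3 t := by
      intro t
      have a1 : 2 * α - t = α - (t - α) := by ring
      have a2 : t = α + (t - α) := by ring
      rw [a1]
      conv_rhs => rw [a2]
      generalize t - α = x
      rw [hP3, hP3, cos_sub, sin_sub, cos_add, sin_add]
      linear_combination 2 * cos x ^ 3 * f2 + 2 * cos x * sin x ^ 2 * f3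
    have sA' : ∀ t, P1 (2 * (α + Real.pi) - t) = -P1 t := by
      intro t
      rw [← sA, hP1, hP1, show 2 * (α + Real.pi) - t = (2 * α - t) + 2 * Real.pi by ring,
        cos_add_two_pi, sin_add_two_pi]
    have sB' : ∀ t, P3 (2 * (α + Real.pi) - t) = -P3 t := by
      intro t
      rw [← sB, hP3, hP3, show 2 * (α + Real.pi) - t = (2 * α - t) + 2 * Real.pi by ring,
        cos_add_two_pi, sin_add_two_pi]
    have r1 := qc_symm P1 P3 C hA hB α α hα.1 sA sB r (fun t ht =>
      hr t ⟨by linarith [ht.1], by linarith [ht.2, hα.2]⟩)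
    have r2 := qc_symm P1 P3 C hA hB (α + Real.pi) (Real.pi - α) (by linarith [hα.2]) sA' sB' r
      (fun t ht => hr t ⟨by linarith [ht.1, hα.1], by linarith [ht.2]⟩)
    rw [sub_self] at r1
    rw [show α + Real.pi - (Real.pi - α) = α + α by ring,
      show α + Real.pi + (Real.pi - α) = 2 * Real.pi by ring] at r2
    rw [← r2, ← r1]
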